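/- Let $K$ be an algebraically closed field and let $\Gamma$ be a finite tree with a fixed cyclic ordering of the edges around each vertex (a Brauer tree of multiplicity one). Let $Q_\Gamma$ be the quiver whose vertices are the edges of $\Gamma$ and which has, for every vertex $s$ of $\Gamma$ and every edge $i$ incident to $s$, one arrow from $i$ to the edge following $i$ in the cyclic order around $s$ (a loop if $s$ is a leaf); thus every vertex $s$ of $\Gamma$ incident to an edge gives an oriented cycle of $Q_\Gamma$, and each vertex of $Q_\Gamma$ lies on exactly two of these cycles. Let $A=KQ_\Gamma/I$ be the basic Brauer tree algebra of $\Gamma$, where $ab$ denotes "first $a$, then $b$" and $I$ is generated by the products of two consecutive arrows lying on the cycles of different vertices of $\Gamma$ and, for each vertex $i$ of $Q_\Gamma$, by the difference of the two oriented cycles (each traversed once) starting at $i$. An $A$-cycle is a maximal ordered set of nonrepeating arrows of $Q_\Gamma$ such that the product in $A$ of any two neighboring arrows is nonzero; a vertex belongs to it if it is the source or the target of one of its arrows. Let $K^b(A)$ be the bounded homotopy category of finitely generated projective left $A$-modules; a bounded complex $T$ of finitely generated projective left $A$-modules is called partial tilting if $\mathrm{Hom}_{D^b(A)}(T,T[k])=0$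 for all $k\neq 0$. Let $i,j$ be vertices of $Q_\Gamma$ with trivial paths $e_i,e_j$, and let $P_i$ and $P_j$ be stalk complexes of the indecomposable projective modules $Ae_i$ and $Ae_j$, concentrated in arbitrary degrees, such that $P_i\oplus P_j$ is a partial tilting complex. Then $\mathrm{Hom}_{K^b(A)}(P_i,P_j)\neq 0$ if and only if $P_i$ and $P_j$ are concentrated in the same degree and the vertices $i$ and $j$ belong to the same $A$-cycle. -/

import Mathlib

universe u v w

open CategoryTheory

noncomputable section

/-! ### The path algebra of a quiver with finitely many vertices -/

/-- The path algebra `K Q`: the vector space with basis all paths of the quiver (including the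
trivial path at each vertex). -/
def PathAlgebra (K : Type u) [Field K] (Q : Type v) [Quiver.{v} Q] : Type (max u v) :=
  (Σ x y : Q, Quiver.Path x y) →₀ K

namespace PathAlgebra

variable (K : Type u) [Field K] (Q : Type v) [Quiver.{v} Q]

instance : AddCommGroup (PathAlgebra K Q) :=
  inferInstanceAs (AddCommGroup ((Σ x y : Q, Quiver.Path x y) →₀ K))

instance : Module K (PathAlgebra K Q) :=
  inferInstanceAs (Module K ((Σ x y : Q, Quiver.Path x y) →₀ K))

variable {Q}

/-- The basis element of the path algebra given by a path. -/
def ofPath {x y : Q} (p : Quiver.Path x y) : PathAlgebra K Q :=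
  Finsupp.single ⟨x, y, p⟩ 1

open Classical in
/-- The product of two paths: the concatenation "first `p`, then `q`" if `p` ends where `q`
starts, and `0` otherwise. -/
def pathMul (p q : Σ x y : Q, Quiver.Path x y) : PathAlgebra K Q :=
  if h : p.2.1 = q.1 then ofPath K (p.2.2.comp (q.2.2.cast h.symm rfl)) else 0

variable (Q)

/-- The multiplication of the path algebra, the bilinear extension of `pathMul`. -/
def mulLin : PathAlgebra K Q →ₗ[K] PathAlgebra K Q →ₗ[K] PathAlgebra K Q :=
  Finsupp.linearCombination K fun p => Finsupp.linearCombination K fun q => pathMul K p q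

instance : Mul (PathAlgebra K Q) := ⟨fun a b => mulLin K Q a b⟩

variable {Q}

theorem mul_def (a b : PathAlgebra K Q) : a * b = mulLin K Q a b := rfl

theorem ofPath_mul_ofPath {x y x' y' : Q} (p : Quiver.Path x y) (q : Quiver.Path x' y') :
    ofPath K p * ofPath K q = pathMul K ⟨x, y, p⟩ ⟨x', y', q⟩ := by
  rw [mul_def]
  unfold mulLin ofPath
  erw [Finsupp.linearCombination_single, one_smul, Finsupp.linearCombination_single, one_smul]

theorem ofPath_mul_comp {x y z : Q} (p : Quiver.Path x y) (q : Quiver.Path y z) :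
    ofPath K p * ofPath K q = ofPath K (p.comp q) := by
  rw [ofPath_mul_ofPath, pathMul, dif_pos rfl]
  rfl

theorem ofPath_mul_of_ne {x y x' y' : Q} (p : Quiver.Path x y) (q : Quiver.Path x' y')
    (h : y ≠ x') : ofPath K p * ofPath K q = 0 := by
  rw [ofPath_mul_ofPath, pathMul, dif_neg h]

variable {K} in
theorem induction_ofPath {P : PathAlgebra K Q → Prop} (a : PathAlgebra K Q) (h0 : P 0)
    (hadd : ∀ a b, P a → P b → P (a + b))
    (hp : ∀ (c : K) (x y : Q) (p : Quiver.Path x y), P (c • ofPath K p)) : P a := by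
  refine Finsupp.induction_linear (motive := P) a h0 hadd ?_
  rintro ⟨x, y, p⟩ c
  have h := hp c x y p
  unfold ofPath at h
  erw [Finsupp.smul_single, smul_eq_mul, mul_one] at h
  exact h

theorem smul_mul' (c : K) (a b : PathAlgebra K Q) : (c • a) * b = c • (a * b) := by
  simp [mul_def]

theorem mul_smul' (c : K) (a b : PathAlgebra K Q) : a * (c • b) = c • (a * b) := by
  simp [mul_def]

theorem add_mul' (a b c : PathAlgebra K Q) : (a + b) * c = a * c + b * c := by
  simp [mul_def]

theorem mul_add' (a b c : PathAlgebra K Q) : a * (b + c) = a * b + a * c := by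
  simp [mul_def]

theorem zero_mul' (a : PathAlgebra K Q) : 0 * a = 0 := by
  simp [mul_def]

theorem mul_zero' (a : PathAlgebra K Q) : a * 0 = 0 := by
  simp [mul_def]

theorem ofPath_assoc {x y x' y' x'' y'' : Q} (p : Quiver.Path x y) (q : Quiver.Path x' y')
    (r : Quiver.Path x'' y'') :
    ofPath K p * ofPath K q * ofPath K r = ofPath K p * (ofPath K q * ofPath K r) := by
  by_cases h : y = x'
  · subst h
    by_cases h' : y' = x''
    · subst h'
      simp only [ofPath_mul_comp, Quiver.Path.comp_assoc]
    · rw [ofPath_mul_comp, ofPath_mul_of_ne K _ _ h', ofPath_mul_of_ne K _ _ h', mul_zero']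
  · rw [ofPath_mul_of_ne K _ _ h, zero_mul']
    by_cases h' : y' = x''
    · subst h'
      rw [ofPath_mul_comp, ofPath_mul_of_ne K _ _ h]
    · rw [ofPath_mul_of_ne K _ _ h', mul_zero']

theorem mul_assoc' (a b c : PathAlgebra K Q) : a * b * c = a * (b * c) := by
  induction a using induction_ofPath with
  | h0 => simp only [zero_mul']
  | hadd a a' h h' => simp only [add_mul', h, h']
  | hp k x y p =>
    induction b using induction_ofPath with
    | h0 => simp only [zero_mul', mul_zero']
    | hadd a a' h h' => simp only [add_mul', mul_add', h, h']
    | hp k' x' y' p' =>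
      induction c using induction_ofPath with
      | h0 => simp only [mul_zero']
      | hadd a a' h h' => simp only [mul_add', h, h']
      | hp k'' x'' y'' p'' => simp only [smul_mul', mul_smul', ofPath_assoc]

variable [Fintype Q]

variable (Q) in
/-- The identity is the sum of the trivial paths. -/
instance : One (PathAlgebra K Q) := ⟨∑ x : Q, ofPath K (Quiver.Path.nil : Quiver.Path x x)⟩

theorem one_def : (1 : PathAlgebra K Q) = ∑ x : Q, ofPath K (Quiver.Path.nil : Quiver.Path x x) :=
  rfl

theorem one_mul' (a : PathAlgebra K Q) : 1 * a = a := by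
  induction a using induction_ofPath with
  | h0 => exact mul_zero' K _
  | hadd a a' h h' => rw [mul_add', h, h']
  | hp k x y p =>
    rw [mul_smul', one_def, mul_def, map_sum, LinearMap.sum_apply]
    simp only [← mul_def]
    rw [Finset.sum_eq_single x, ofPath_mul_comp, Quiver.Path.nil_comp]
    · intro z _ hz
      exact ofPath_mul_of_ne K _ _ hz
    · simp

theorem mul_one' (a : PathAlgebra K Q) : a * 1 = a := by
  induction a using induction_ofPath with
  | h0 => exact zero_mul' K _
  | hadd a a' h h' => rw [add_mul', h, h']
  | hp k x y p =>
    rw [smul_mul', one_def, mul_def, map_sum]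
    simp only [← mul_def]
    rw [Finset.sum_eq_single y, ofPath_mul_comp, Quiver.Path.comp_nil]
    · intro z _ hz
      exact ofPath_mul_of_ne K _ _ hz.symm
    · simp

instance : Ring (PathAlgebra K Q) :=
  { (inferInstance : AddCommGroup (PathAlgebra K Q)),
    (inferInstance : Mul (PathAlgebra K Q)),
    (inferInstance : One (PathAlgebra K Q)) with
    left_distrib := mul_add' K
    right_distrib := add_mul' K
    zero_mul := zero_mul' K
    mul_zero := mul_zero' K
    mul_assoc := mul_assoc' K
    one_mul := one_mul' K
    mul_one := mul_one' K }

instance : Algebra K (PathAlgebra K Q) :=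
  Algebra.ofModule (smul_mul' K) (mul_smul' K)

end PathAlgebra

/-! ### Brauer trees of multiplicity one and their algebras -/

/-- A Brauer tree of multiplicity one with vertex set `V`: a tree together with a cyclic ordering
of the edges incident to each vertex. A dart `d` of the graph is the edge `d.edge` seen as incident
to its vertex `d.fst`; `next d` is the edge that follows it in the cyclic order around `d.fst`. -/
structure BrauerTree (V : Type v) where
  graph : SimpleGraph V
  isTree : graph.IsTree
  next : Equiv.Perm graph.Dart
  next_fst : ∀ d, (next d).fst = d.fst
  next_cyclic : ∀ d d' : graph.Dart, d.fst = d'.fst → next.SameCycle d d'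

namespace BrauerTree

variable {V : Type v} [Fintype V] (T : BrauerTree V)

/-- The edges of the tree, which are the vertices of its quiver. -/
def Edge : Type v := T.graph.edgeSet

instance : Fintype T.Edge := by
  classical
  exact @Fintype.ofFinite _ (inferInstanceAs (Finite T.graph.edgeSet))

variable {T} in
/-- The edge underlying a dart. -/
def edgeOf (d : T.graph.Dart) : T.Edge := ⟨d.edge, d.edge_mem⟩

/-- The Brauer quiver: for every vertex of the tree and every edge `i` incident to it there is
one arrow from `i` to the edge that follows `i` around this vertex (a loop if the vertex is a leaf).
So the arrows are indexed by the darts. -/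
instance : Quiver T.Edge where
  Hom i j := {d : T.graph.Dart // edgeOf d = i ∧ edgeOf (T.next d) = j}

/-- The arrow given by a dart. -/
def arrow (d : T.graph.Dart) : edgeOf d ⟶ edgeOf (T.next d) := ⟨d, rfl, rfl⟩

variable (K : Type u) [Field K]

/-- The arrow given by a dart, as an element of the path algebra. -/
def arrowElt (d : T.graph.Dart) : PathAlgebra K T.Edge :=
  PathAlgebra.ofPath K (T.arrow d).toPath

/-- The product of all arrows of the oriented cycle around `d.fst`, starting at `d.edge`. -/
def cycleElt (d : T.graph.Dart) : PathAlgebra K T.Edge :=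
  ((List.range (Function.minimalPeriod T.next d)).map
    fun k => T.arrowElt K ((T.next ^ k) d)).prod

/-- The defining relations: the product of two consecutive arrows that lie on the oriented cycles
of different vertices of the tree is zero, and the two oriented cycles starting at a given
vertex of the quiver are equal. -/
inductive Rel : PathAlgebra K T.Edge → PathAlgebra K T.Edge → Prop
  | zero (d d' : T.graph.Dart) (hcomp : edgeOf (T.next d) = edgeOf d') (hne : d.fst ≠ d'.fst) :
      Rel (T.arrowElt K d * T.arrowElt K d') 0
  | cycle (d : T.graph.Dart) : Rel (T.cycleElt K d) (T.cycleElt K d.symm)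

/-- The basic Brauer tree algebra of multiplicity one: the quotient of the path algebra by the
two-sided ideal generated by the relations. -/
abbrev Alg : Type (max u v) := RingQuot (T.Rel K)

/-- The projection of the path algebra onto the Brauer tree algebra. -/
def proj : PathAlgebra K T.Edge →ₐ[K] T.Alg K := RingQuot.mkAlgHom K (T.Rel K)

/-- The idempotent `e_i`. -/
def idem (i : T.Edge) : T.Alg K :=
  T.proj K (PathAlgebra.ofPath K (Quiver.Path.nil : Quiver.Path i i))

/-- A list of pairwise distinct arrows such that the product in the algebra of any two neighboring
ones is nonzero. -/
def IsArrowChain (L : List T.graph.Dart) : Prop :=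
  L.Nodup ∧ L.IsChain fun d d' => T.proj K (T.arrowElt K d) * T.proj K (T.arrowElt K d') ≠ 0

/-- An `A`-cycle: a maximal ordered set of nonrepeating arrows such that the product of any two
neighboring arrows is nonzero. -/
def IsACycle (L : List T.graph.Dart) : Prop :=
  T.IsArrowChain K L ∧ ∀ L', T.IsArrowChain K L' → L.Sublist L' → L' = L

/-- The vertex `i` of the quiver is the source or the target of some arrow in `L`. -/
def MemArrows (i : T.Edge) (L : List T.graph.Dart) : Prop :=
  ∃ d ∈ L, edgeOf d = i ∨ edgeOf (T.next d) = i

/-- Two vertices of the quiver belong to the same `A`-cycle. -/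
def SameACycle (i j : T.Edge) : Prop :=
  ∃ L, T.IsACycle K L ∧ T.MemArrows i L ∧ T.MemArrows j L

/-- The projective left module `A e_i`. -/
abbrev projMod (i : T.Edge) : ModuleCat.{max u v} (T.Alg K) :=
  ModuleCat.of (T.Alg K) (Ideal.span {T.idem K i})

end BrauerTree

/-! ### Perfect complexes, `K^b(A)` and partial tilting complexes -/

/-- Bounded complexes of finitely generated projective left modules. -/
def perfectComplexes (A : Type w) [Ring A] :
    ObjectProperty (CochainComplex (ModuleCat.{w} A) ℤ) := fun X =>
  (∃ a b : ℤ, ∀ k, k < a ∨ b < k → Limits.IsZero (X.X k)) ∧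
    ∀ k, Module.Finite A (X.X k) ∧ Module.Projective A (X.X k)

/-- `K^b(A)`, the bounded homotopy category of finitely generated projective left modules, as a
full subcategory of the homotopy category of all complexes of left modules. -/
abbrev Kb (A : Type w) [Ring A] : Type _ :=
  ((perfectComplexes A).map
    (HomotopyCategory.quotient (ModuleCat.{w} A) (ComplexShape.up ℤ))).FullSubcategory

/-- A bounded complex of finitely generated projective modules as an object of `K^b(A)`. -/
def Kb.of {A : Type w} [Ring A] (X : CochainComplex (ModuleCat.{w} A) ℤ)
    (hX : perfectComplexes A X) : Kb A :=
  ⟨(HomotopyCategory.quotient _ _).obj X, ObjectProperty.prop_map_obj _ _ hX⟩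

/-- A perfect complex `X` is partial tilting if `Hom (X, X[k]) = 0` in the derived category
for all `k ≠ 0`. -/
def IsPartialTilting {A : Type u} [Ring A] [HasDerivedCategory.{w} (ModuleCat.{u} A)]
    (X : CochainComplex (ModuleCat.{u} A) ℤ) : Prop :=
  perfectComplexes A X ∧ ∀ k : ℤ, k ≠ 0 →
    ∀ f : DerivedCategory.Q.obj X ⟶ (DerivedCategory.Q.obj X)⟦k⟧, f = 0

namespace BrauerTree

variable {V : Type v} [Fintype V] (T : BrauerTree V) (K : Type u) [Field K]

/-- `X` is (isomorphic to) the stalk complex of `A e_i` concentrated in degree `p`. -/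
def IsStalk (X : CochainComplex (ModuleCat.{max u v} (T.Alg K)) ℤ) (i : T.Edge) (p : ℤ) : Prop :=
  Nonempty (X ≅ (HomologicalComplex.single _ (ComplexShape.up ℤ) p).obj (T.projMod K i))

theorem idem_mul_self (i : T.Edge) : T.idem K i * T.idem K i = T.idem K i := by
  unfold idem
  rw [← map_mul, PathAlgebra.ofPath_mul_comp, Quiver.Path.comp_nil]

theorem projective_projMod (i : T.Edge) : Module.Projective (T.Alg K) (T.projMod K i) := by
  have hmem : T.idem K i ∈ Ideal.span {T.idem K i} := Ideal.subset_span rfl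
  refine Module.Projective.of_split (M := T.Alg K)
    (Submodule.subtype (Ideal.span {T.idem K i}))
    (LinearMap.toSpanSingleton (T.Alg K) (Ideal.span {T.idem K i}) ⟨T.idem K i, hmem⟩) ?_
  ext ⟨x, hx⟩
  obtain ⟨a, rfl⟩ := Ideal.mem_span_singleton'.1 hx
  simp [mul_assoc, idem_mul_self]

theorem finite_projMod (i : T.Edge) : Module.Finite (T.Alg K) (T.projMod K i) :=
  Module.Finite.iff_fg.2 ⟨{T.idem K i}, by simp [Ideal.span]⟩

variable {T K} in
theorem IsStalk.perfect {X : CochainComplex (ModuleCat.{max u v} (T.Alg K)) ℤ} {i : T.Edge} {p : ℤ}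
    (h : T.IsStalk K X i p) : perfectComplexes (T.Alg K) X := by
  obtain ⟨φ⟩ := h
  have e (k : ℤ) : X.X k ≅
      ((HomologicalComplex.single _ (ComplexShape.up ℤ) p).obj (T.projMod K i)).X k :=
    (HomologicalComplex.eval _ _ k).mapIso φ
  have hz (k : ℤ) (hk : k ≠ p) : Limits.IsZero (X.X k) :=
    (HomologicalComplex.isZero_single_obj_X _ _ _ _ hk).of_iso (e k)
  refine ⟨⟨p, p, fun k hk => hz k (by lia)⟩, fun k => ?_⟩
  by_cases hk : k = p
  · have f : T.projMod K i ≃ₗ[T.Alg K] X.X k :=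
      ((e k).trans (HomologicalComplex.singleObjXIsoOfEq _ _ _ _ hk)).toLinearEquiv.symm
    have := finite_projMod T K i
    have := projective_projMod T K i
    exact ⟨Module.Finite.equiv f, Module.Projective.of_equiv f⟩
  · have : Subsingleton (X.X k) := ModuleCat.subsingleton_of_isZero (hz k hk)
    exact ⟨inferInstance, inferInstance⟩

end BrauerTree

end

noncomputable section

/-!
Morphisms of stalk complexes up to homotopy vanish between different degrees and are module
morphisms within one degree, and `Hom (A e_i, A e_j)` is nonzero exactly when some path from `i` to
`j` is nonzero in `A`. By the zero relations, all arrows of such a path turn around one vertex of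
the tree, so the edges `i` and `j` share that vertex. Conversely, every path around a vertex of at
most one full turn is a factor of the full turn, and full turns are nonzero: the linear form which
is `1` on full turns and `0` on all other paths takes equal values on the two sides of every
relation, so it descends to `A`. The same facts show that the `A`-cycles are the full turns around
the vertices of the tree, so `i` and `j` belong to a common one exactly when they share a vertex.
-/

/-! ### Linear maps on path algebras and quotient rings -/

section RingQuot

variable {R M : Type*} [Semiring R] [AddCommMonoid M] (t : R →+ M)

/-- The coarsest ring congruence on whose classes the additive map `t` is constant; it lets a map
that is not multiplicative descend to a quotient ring. -/
def coarsestRingCon : RingCon R where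
  r x y := ∀ a b, t (a * x * b) = t (a * y * b)
  iseqv := ⟨fun _ _ _ => rfl, fun h a b => (h a b).symm, fun h h' a b => (h a b).trans (h' a b)⟩
  add' h h' a b := by simp only [mul_add, add_mul, map_add, h a b, h' a b]
  mul' {w x y z} h h' a b := calc
    t (a * (w * y) * b) = t (a * w * (y * b)) := by simp only [mul_assoc]
    _ = t (a * x * (y * b)) := h a (y * b)
    _ = t (a * x * y * b) := by simp only [mul_assoc]
    _ = t (a * x * z * b) := h' (a * x) b
    _ = t (a * (x * z) * b) := by simp only [mul_assoc]

theorem map_eq_of_mkRingHom_eq {r : R → R → Prop}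
    (hr : ∀ ⦃x y⦄, r x y → ∀ a b, t (a * x * b) = t (a * y * b)) {x y : R}
    (hxy : RingQuot.mkRingHom r x = RingQuot.mkRingHom r y) : t x = t y := by
  have hmk : ∀ ⦃x y⦄, r x y → (coarsestRingCon t).mk' x = (coarsestRingCon t).mk' y :=
    fun x y h => (RingCon.eq _).2 (hr h)
  have hcon := congrArg (RingQuot.lift ⟨(coarsestRingCon t).mk', hmk⟩) hxy
  rw [RingQuot.lift_mkRingHom_apply, RingQuot.lift_mkRingHom_apply] at hcon
  simpa only [one_mul, mul_one] using (RingCon.eq _).1 hcon 1 1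

end RingQuot

theorem PathAlgebra.map_mul_mul_eq_of_ofPath {K : Type u} [Field K] {Q : Type v} [Quiver.{v} Q]
    [Fintype Q] {M : Type*} [AddCommMonoid M] [Module K M] (t : PathAlgebra K Q →ₗ[K] M)
    {x y : PathAlgebra K Q}
    (h : ∀ (i j i' j' : Q) (p : Quiver.Path i j) (q : Quiver.Path i' j'),
      t (ofPath K p * x * ofPath K q) = t (ofPath K p * y * ofPath K q))
    (a b : PathAlgebra K Q) : t (a * x * b) = t (a * y * b) := by
  induction a using PathAlgebra.induction_ofPath with
  | h0 => simp only [zero_mul]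
  | hadd a a' ha ha' => simp only [add_mul, map_add, ha, ha']
  | hp c i j p =>
    induction b using PathAlgebra.induction_ofPath with
    | h0 => simp only [mul_zero]
    | hadd b b' hb hb' => simp only [mul_add, map_add, hb, hb']
    | hp c' i' j' q => simp only [smul_mul_assoc, mul_smul_comm, map_smul, h]

/-! ### Nonzero morphism spaces -/

section Idempotent

variable {A : Type*} [Semiring A] {e : A}

theorem nontrivial_linearMap_span_idempotent_iff (he : IsIdempotentElem e) (M : Type*)
    [AddCommMonoid M] [Module A M] :
    Nontrivial (Ideal.span {e} →ₗ[A] M) ↔ ∃ m : M, e • m ≠ 0 := by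
  let e' : Ideal.span {e} := ⟨e, Ideal.mem_span_singleton_self e⟩
  rw [nontrivial_iff_exists_ne 0]
  constructor
  · rintro ⟨f, hf⟩
    refine ⟨f e', fun h => hf (LinearMap.ext fun ⟨y, hy⟩ => ?_)⟩
    obtain ⟨a, rfl⟩ := Ideal.mem_span_singleton'.1 hy
    have hsmul : (⟨a * e, hy⟩ : Ideal.span {e}) = a • e • e' :=
      Subtype.ext (congrArg (a * ·) he.symm)
    rw [hsmul, map_smul, map_smul, h, smul_zero, LinearMap.zero_apply]
  · rintro ⟨m, hm⟩
    exact ⟨(LinearMap.toSpanSingleton A M m).domRestrict _, fun h => hm (LinearMap.congr_fun h e')⟩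

theorem nontrivial_linearMap_span_span_iff (he : IsIdempotentElem e) (f : A) :
    Nontrivial (Ideal.span {e} →ₗ[A] Ideal.span {f}) ↔ ∃ x, e * x * f ≠ 0 := by
  simp [nontrivial_linearMap_span_idempotent_iff he, Ideal.mem_span_singleton',
    ← Subtype.coe_ne_coe, mul_assoc]

end Idempotent

section Homotopy

variable {C : Type*} [Category* C] [Preadditive C] {ι : Type*} {c : ComplexShape ι}

theorem eq_of_homotopy_of_d_eq_zero {X Y : HomologicalComplex C c} (hX : ∀ i j, X.d i j = 0)
    (hY : ∀ i j, Y.d i j = 0) {f g : X ⟶ Y} (h : Homotopy f g) : f = g := by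
  ext i
  rw [h.comm i]
  simp [dNext, prevD, hX, hY]

variable [Limits.HasZeroObject C] [DecidableEq ι]

variable (C c) in
/-- Sending an object to its stalk complex in a fixed degree is fully faithful, even up to
homotopy. -/
def fullyFaithfulSingleCompQuotient (p : ι) :
    (HomologicalComplex.single C c p ⋙ HomotopyCategory.quotient C c).FullyFaithful :=
  have : (HomologicalComplex.single C c p ⋙ HomotopyCategory.quotient C c).Faithful :=
    ⟨fun {_ _ _ _} h => (HomologicalComplex.single C c p).map_injective <|
      eq_of_homotopy_of_d_eq_zero (HomologicalComplex.single_obj_d c p _)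
        (HomologicalComplex.single_obj_d c p _) (HomotopyCategory.homotopyOfEq _ _ h)⟩
  .ofFullyFaithful _

theorem nontrivial_quotient_single_hom_iff (M N : C) (p q : ι) :
    Nontrivial ((HomotopyCategory.quotient C c).obj ((HomologicalComplex.single C c p).obj M) ⟶
      (HomotopyCategory.quotient C c).obj ((HomologicalComplex.single C c q).obj N)) ↔
      p = q ∧ Nontrivial (M ⟶ N) := by
  obtain rfl | hpq := eq_or_ne p q
  · simpa using ((fullyFaithfulSingleCompQuotient C c p).homEquiv
      (X := M) (Y := N)).nontrivial_congr.symm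
  · have hsub : Subsingleton ((HomologicalComplex.single C c p).obj M ⟶
        (HomologicalComplex.single C c q).obj N) :=
      ⟨fun _ _ => HomologicalComplex.from_single_hom_ext
        ((HomologicalComplex.isZero_single_obj_X c q N p hpq).eq_of_tgt _ _)⟩
    have := (HomotopyCategory.quotient C c).map_surjective (X :=
      (HomologicalComplex.single C c p).obj M) (Y := (HomologicalComplex.single C c q).obj N)
      |>.subsingleton
    simpa [hpq, not_nontrivial_iff_subsingleton] using this

end Homotopy

theorem Kb.nontrivial_hom_iff {A : Type w} [Ring A]
    {X Y X' Y' : CochainComplex (ModuleCat.{w} A) ℤ}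
    (hX : perfectComplexes A X) (hY : perfectComplexes A Y) (φ : X ≅ X') (ψ : Y ≅ Y') :
    Nontrivial (Kb.of X hX ⟶ Kb.of Y hY) ↔
      Nontrivial ((HomotopyCategory.quotient _ _).obj X' ⟶
        (HomotopyCategory.quotient _ _).obj Y') :=
  ((InducedCategory.homEquiv (X := Kb.of X hX) (Y := Kb.of Y hY)).trans
    (((HomotopyCategory.quotient _ _).mapIso φ).homCongr
      ((HomotopyCategory.quotient _ _).mapIso ψ))).nontrivial_congr

namespace BrauerTree

variable {V : Type v} {T : BrauerTree V}

/-! ### Turning around a vertex of the tree -/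

theorem edgeOf_symm (d : T.graph.Dart) : edgeOf d.symm = edgeOf d :=
  Subtype.ext d.edge_symm

theorem fst_mem_edgeOf (d : T.graph.Dart) : d.fst ∈ (edgeOf d).1 :=
  Sym2.mem_mk_left d.fst d.snd

theorem fst_mem_edgeOf_next (d : T.graph.Dart) : d.fst ∈ (edgeOf (T.next d)).1 :=
  T.next_fst d ▸ fst_mem_edgeOf (T.next d)

theorem exists_dart_of_mem {i : T.Edge} {s : V} (hs : s ∈ i.1) :
    ∃ d : T.graph.Dart, edgeOf d = i ∧ d.fst = s := by
  obtain ⟨y, hy⟩ := Sym2.mem_iff_exists.1 hs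
  exact ⟨⟨(s, y), (SimpleGraph.mem_edgeSet _).1 (hy ▸ i.2)⟩, Subtype.ext hy.symm, rfl⟩

theorem MemArrows.exists_fst_mem {i : T.Edge} {L : List T.graph.Dart} (h : T.MemArrows i L) :
    ∃ d ∈ L, d.fst ∈ i.1 := by
  obtain ⟨d, hd, rfl | rfl⟩ := h
  · exact ⟨d, hd, fst_mem_edgeOf d⟩
  · exact ⟨d, hd, fst_mem_edgeOf_next d⟩

theorem next_pow_fst (d : T.graph.Dart) (k : ℕ) : ((T.next ^ k) d).fst = d.fst := by
  induction k with
  | zero => rfl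
  | succ k ih => rw [pow_succ', Equiv.Perm.mul_apply, T.next_fst, ih]

variable (T) in
/-- The number of edges incident to `d.fst`, encoded as the period of `d` under `next`. -/
def valency (d : T.graph.Dart) : ℕ := Function.minimalPeriod T.next d

variable (T) in
/-- The darts at the vertex `d.fst`, listed in their cyclic order starting from `d`. -/
def turn (d : T.graph.Dart) : List T.graph.Dart :=
  (List.range (T.valency d)).map fun k => (T.next ^ k) d

theorem length_turn (d : T.graph.Dart) : (T.turn d).length = T.valency d := by
  rw [turn, List.length_map, List.length_range]

theorem coe_turn (d : T.graph.Dart) : (T.turn d : Cycle T.graph.Dart) =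
    Function.periodicOrbit T.next d := by
  simp only [turn, valency, Function.periodicOrbit, Equiv.Perm.iterate_eq_pow]

theorem nodup_turn (d : T.graph.Dart) : (T.turn d).Nodup := by
  rw [← Cycle.nodup_coe_iff, coe_turn]
  exact Function.nodup_periodicOrbit

theorem next_pow_valency (d : T.graph.Dart) : (T.next ^ T.valency d) d = d := by
  rw [← Equiv.Perm.iterate_eq_pow]
  exact Function.iterate_minimalPeriod

section Finite

variable [Finite V]

instance finite_dart : Finite T.graph.Dart :=
  .of_injective _ SimpleGraph.Dart.toProd_injective

theorem valency_pos (d : T.graph.Dart) : 0 < T.valency d :=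
  Function.minimalPeriod_pos_of_mem_periodicPts (T.next.injective.mem_periodicPts d)

theorem mem_turn_iff {d d' : T.graph.Dart} : d' ∈ T.turn d ↔ d'.fst = d.fst := by
  rw [← Cycle.mem_coe_iff, coe_turn,
    Function.mem_periodicOrbit_iff (T.next.injective.mem_periodicPts d)]
  simp only [Equiv.Perm.iterate_eq_pow]
  constructor
  · rintro ⟨k, rfl⟩
    exact next_pow_fst d k
  · intro h
    obtain ⟨k, -, hk⟩ := (T.next_cyclic d d' h.symm).exists_pow_eq'
    exact ⟨k, hk⟩

theorem exists_next_pow_eq {d d' : T.graph.Dart} (h : d'.fst = d.fst) :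
    ∃ k < T.valency d, (T.next ^ k) d = d' := by
  simpa only [turn, List.mem_map, List.mem_range] using mem_turn_iff.2 h

theorem valency_eq_of_fst_eq {d d' : T.graph.Dart} (h : d'.fst = d.fst) :
    T.valency d' = T.valency d := by
  obtain ⟨k, -, rfl⟩ := exists_next_pow_eq h
  rw [← Equiv.Perm.iterate_eq_pow]
  exact Function.minimalPeriod_apply_iterate (T.next.injective.mem_periodicPts d) k

theorem append_turn_append_mem_range_turn_iff (L M : List T.graph.Dart) (d : T.graph.Dart) :
    L ++ T.turn d ++ M ∈ Set.range T.turn ↔ L = [] ∧ M = [] := by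
  constructor
  · rintro ⟨e, he⟩
    have hd : d ∈ T.turn e := by
      rw [he]
      simp [mem_turn_iff]
    have hlength := congrArg List.length he
    simp only [List.length_append, length_turn,
      valency_eq_of_fst_eq (mem_turn_iff.1 hd)] at hlength
    exact ⟨List.length_eq_zero_iff.1 (by lia), List.length_eq_zero_iff.1 (by lia)⟩
  · rintro ⟨rfl, rfl⟩
    exact ⟨d, by simp⟩

end Finite

/-! ### Paths of the Brauer quiver -/

/-- The darts that index the arrows of a path of the Brauer quiver. -/
def pathDarts {i : T.Edge} : {j : T.Edge} → Quiver.Path i j → List T.graph.Dart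
  | _, .nil => []
  | _, .cons p a => pathDarts p ++ [a.1]

theorem pathDarts_comp {i j k : T.Edge} (p : Quiver.Path i j) (q : Quiver.Path j k) :
    pathDarts (p.comp q) = pathDarts p ++ pathDarts q := by
  induction q with
  | nil => simp [pathDarts]
  | cons q a ih => simp [pathDarts, ih]

/-- The path of length `k` that starts at the edge of `d` and turns around the vertex `d.fst`. -/
def arc (d : T.graph.Dart) : (k : ℕ) → Quiver.Path (edgeOf d) (edgeOf ((T.next ^ k) d))
  | 0 => .nil
  | k + 1 => (arc d k).cons ⟨(T.next ^ k) d, rfl, by rw [pow_succ', Equiv.Perm.mul_apply]⟩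

theorem pathDarts_arc (d : T.graph.Dart) (k : ℕ) :
    pathDarts (arc d k) = (List.range k).map fun l => (T.next ^ l) d := by
  induction k with
  | zero => rfl
  | succ k ih => rw [arc, pathDarts, ih, List.range_succ, List.map_append, List.map_singleton]

theorem pathDarts_arc_valency (d : T.graph.Dart) : pathDarts (arc d (T.valency d)) = T.turn d :=
  pathDarts_arc d _

variable (K : Type u) [Field K]

theorem ofPath_cons {i j k : T.Edge} (p : Quiver.Path i j) (a : j ⟶ k) :
    PathAlgebra.ofPath K (p.cons a) = PathAlgebra.ofPath K p * T.arrowElt K a.1 := by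
  obtain ⟨d, rfl, rfl⟩ := a
  rw [arrowElt, PathAlgebra.ofPath_mul_comp]
  rfl

variable [Fintype V]

theorem ofPath_cons_eq_prod {i j k : T.Edge} (p : Quiver.Path i j) (a : j ⟶ k) :
    PathAlgebra.ofPath K (p.cons a) = ((pathDarts (p.cons a)).map (T.arrowElt K)).prod := by
  induction p generalizing k with
  | nil =>
    obtain ⟨d, rfl, rfl⟩ := a
    simp only [pathDarts, List.nil_append, List.map_singleton, List.prod_singleton]
    rfl
  | cons p b ih =>
    rw [ofPath_cons, ih]
    simp [pathDarts, mul_assoc]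

theorem cycleElt_eq_ofPath_arc (d : T.graph.Dart) :
    T.cycleElt K d = PathAlgebra.ofPath K (arc d (T.valency d)) := by
  have hcycle : T.cycleElt K d = ((T.turn d).map (T.arrowElt K)).prod := by
    rw [cycleElt, turn, List.map_map]
    rfl
  rw [hcycle, ← pathDarts_arc_valency]
  obtain ⟨k, hk⟩ := Nat.exists_eq_succ_of_ne_zero (valency_pos d).ne'
  rw [hk]
  exact (ofPath_cons_eq_prod K _ _).symm

/-! ### The symmetrizing form -/

variable (T) in
open Classical in
/-- The linear form on the path algebra that is `1` on the paths running exactly once around a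
vertex of the tree and `0` on all other paths. It descends to the symmetrizing form of the Brauer
tree algebra. -/
def symmetrizingForm : PathAlgebra K T.Edge →ₗ[K] K :=
  Finsupp.linearCombination K fun p => if pathDarts p.2.2 ∈ Set.range T.turn then (1 : K) else 0

open Classical in
theorem symmetrizingForm_ofPath {i j : T.Edge} (p : Quiver.Path i j) :
    T.symmetrizingForm K (PathAlgebra.ofPath K p) =
      if pathDarts p ∈ Set.range T.turn then (1 : K) else 0 :=
  (Finsupp.linearCombination_single K 1 _).trans (one_smul K _)

open Classical in
theorem symmetrizingForm_ofPath_mul_mul {i j i' j' i'' j'' : T.Edge} (p : Quiver.Path i j)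
    (q : Quiver.Path i' j') (r : Quiver.Path i'' j'') :
    T.symmetrizingForm K
        (PathAlgebra.ofPath K p * PathAlgebra.ofPath K q * PathAlgebra.ofPath K r) =
      if j = i' ∧ j' = i'' ∧ pathDarts p ++ pathDarts q ++ pathDarts r ∈ Set.range T.turn
        then (1 : K) else 0 := by
  by_cases hpq : j = i'
  · subst hpq
    by_cases hqr : j' = i''
    · subst hqr
      simp only [PathAlgebra.ofPath_mul_comp, symmetrizingForm_ofPath, pathDarts_comp, true_and]
    · rw [PathAlgebra.ofPath_mul_comp, PathAlgebra.ofPath_mul_of_ne K _ _ hqr, map_zero,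
        if_neg fun h => hqr h.2.1]
  · rw [PathAlgebra.ofPath_mul_of_ne K _ _ hpq, zero_mul, map_zero, if_neg fun h => hpq h.1]

theorem symmetrizingForm_mul_mul_eq_of_rel {x y : PathAlgebra K T.Edge} (h : T.Rel K x y)
    (a b : PathAlgebra K T.Edge) :
    T.symmetrizingForm K (a * x * b) = T.symmetrizingForm K (a * y * b) := by
  refine PathAlgebra.map_mul_mul_eq_of_ofPath _ (fun i j i' j' p q => ?_) a b
  cases h with
  | zero d d' hcomp hne =>
    have hpath : T.arrowElt K d * T.arrowElt K d' =
        PathAlgebra.ofPath K ((T.arrow d).toPath.cons ⟨d', hcomp.symm, rfl⟩) := by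
      rw [ofPath_cons]
      rfl
    rw [hpath, symmetrizingForm_ofPath_mul_mul, mul_zero, zero_mul, map_zero, if_neg]
    rintro ⟨-, -, e, he⟩
    have hfst : ∀ d'' ∈ [d, d'], d''.fst = e.fst := fun d'' hd'' => by
      rw [← mem_turn_iff, he]
      obtain rfl | rfl := List.mem_pair.1 hd'' <;> simp [pathDarts, Quiver.Hom.toPath, arrow]
    exact hne ((hfst d (by simp)).trans (hfst d' (by simp)).symm)
  | cycle d =>
    rw [cycleElt_eq_ofPath_arc, cycleElt_eq_ofPath_arc, symmetrizingForm_ofPath_mul_mul,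
      symmetrizingForm_ofPath_mul_mul]
    congr 3 <;>
      simp only [pathDarts_arc_valency, append_turn_append_mem_range_turn_iff, next_pow_valency,
        edgeOf_symm]

theorem symmetrizingForm_eq_of_proj_eq {x y : PathAlgebra K T.Edge}
    (h : T.proj K x = T.proj K y) : T.symmetrizingForm K x = T.symmetrizingForm K y := by
  refine map_eq_of_mkRingHom_eq (r := T.Rel K) (T.symmetrizingForm K).toAddMonoidHom
    (fun _ _ => symmetrizingForm_mul_mul_eq_of_rel K) ?_
  rwa [← RingQuot.mkAlgHom_coe K]

/-! ### Nonzero paths -/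

theorem proj_ofPath_arc_ne_zero (d : T.graph.Dart) {k : ℕ} (h : k ≤ T.valency d) :
    T.proj K (PathAlgebra.ofPath K (arc d k)) ≠ 0 := by
  induction h using Nat.decreasingInduction with
  | self =>
    rw [← map_zero (T.proj K)]
    intro h0
    have hform := symmetrizingForm_eq_of_proj_eq K h0
    rw [map_zero, symmetrizingForm_ofPath, pathDarts_arc_valency, if_pos ⟨d, rfl⟩] at hform
    exact one_ne_zero hform
  | of_succ k _ ih =>
    rw [arc, ofPath_cons, map_mul] at ih
    exact left_ne_zero_of_mul ih

theorem proj_arrowElt_mul_next_ne_zero (d : T.graph.Dart) {k : ℕ} (h : k + 2 ≤ T.valency d) :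
    T.proj K (T.arrowElt K ((T.next ^ k) d)) * T.proj K (T.arrowElt K ((T.next ^ (k + 1)) d)) ≠
      0 := by
  have harc := proj_ofPath_arc_ne_zero K d h
  rw [arc, ofPath_cons, arc, ofPath_cons, map_mul, map_mul, mul_assoc] at harc
  exact right_ne_zero_of_mul harc

variable {K}

theorem fst_eq_of_proj_mul_ne_zero {d d' : T.graph.Dart}
    (h : T.proj K (T.arrowElt K d) * T.proj K (T.arrowElt K d') ≠ 0) : d.fst = d'.fst := by
  contrapose! h
  rw [← map_mul]
  by_cases hcomp : edgeOf (T.next d) = edgeOf d'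
  · rw [proj, RingQuot.mkAlgHom_rel K (Rel.zero d d' hcomp h), map_zero]
  · rw [arrowElt, arrowElt, PathAlgebra.ofPath_mul_of_ne K _ _ hcomp, map_zero]

theorem fst_mem_of_proj_ofPath_cons_ne_zero {i j k : T.Edge} (p : Quiver.Path i j) (a : j ⟶ k)
    (h : T.proj K (PathAlgebra.ofPath K (p.cons a)) ≠ 0) : a.1.fst ∈ i.1 := by
  induction p generalizing k with
  | nil =>
    obtain ⟨d, rfl, rfl⟩ := a
    exact fst_mem_edgeOf d
  | cons p b ih =>
    rw [ofPath_cons, map_mul] at h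
    have hb : b.1.fst ∈ _ := ih b (left_ne_zero_of_mul h)
    rw [ofPath_cons, map_mul, mul_assoc] at h
    exact fst_eq_of_proj_mul_ne_zero (right_ne_zero_of_mul h) ▸ hb

/-- Two edges of the tree have a common vertex. An edge has a common vertex with itself. -/
def SharesVertex (i j : T.Edge) : Prop := ∃ s, s ∈ i.1 ∧ s ∈ j.1

theorem sharesVertex_of_proj_ofPath_ne_zero {i j : T.Edge} {p : Quiver.Path i j}
    (h : T.proj K (PathAlgebra.ofPath K p) ≠ 0) : SharesVertex i j := by
  cases p with
  | nil => exact ⟨_, i.1.out_fst_mem, i.1.out_fst_mem⟩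
  | cons p a =>
    obtain ⟨d, rfl, rfl⟩ := a
    exact ⟨d.fst, fst_mem_of_proj_ofPath_cons_ne_zero p _ h, fst_mem_edgeOf_next d⟩

variable (K)

theorem exists_proj_ofPath_ne_zero_iff (i j : T.Edge) :
    (∃ p : Quiver.Path i j, T.proj K (PathAlgebra.ofPath K p) ≠ 0) ↔ SharesVertex i j := by
  constructor
  · rintro ⟨p, hp⟩
    exact sharesVertex_of_proj_ofPath_ne_zero hp
  · rintro ⟨s, hi, hj⟩
    obtain ⟨d, rfl, rfl⟩ := exists_dart_of_mem hi
    obtain ⟨d', rfl, hd'⟩ := exists_dart_of_mem hj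
    obtain ⟨k, hk, rfl⟩ := exists_next_pow_eq hd'
    exact ⟨arc d k, proj_ofPath_arc_ne_zero K d hk.le⟩

theorem idem_mul_proj_ofPath_mul_idem {i j : T.Edge} (p : Quiver.Path i j) :
    T.idem K i * T.proj K (PathAlgebra.ofPath K p) * T.idem K j =
      T.proj K (PathAlgebra.ofPath K p) := by
  rw [idem, idem, ← map_mul, ← map_mul, PathAlgebra.ofPath_mul_comp, PathAlgebra.ofPath_mul_comp,
    Quiver.Path.nil_comp, Quiver.Path.comp_nil]

theorem idem_mul_mul_idem_eq_zero {i j : T.Edge}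
    (h : ∀ p : Quiver.Path i j, T.proj K (PathAlgebra.ofPath K p) = 0) (x : T.Alg K) :
    T.idem K i * x * T.idem K j = 0 := by
  obtain ⟨x, rfl⟩ : ∃ y, T.proj K y = x := RingQuot.mkAlgHom_surjective K (T.Rel K) x
  induction x using PathAlgebra.induction_ofPath with
  | h0 => rw [map_zero, mul_zero, zero_mul]
  | hadd a b ha hb => rw [map_add, mul_add, add_mul, ha, hb, add_zero]
  | hp c k l p =>
    rw [map_smul, mul_smul_comm, smul_mul_assoc]
    by_cases hi : i = k
    · by_cases hj : l = j
      · subst hi hj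
        rw [idem_mul_proj_ofPath_mul_idem, h, smul_zero]
      · rw [idem, idem, mul_assoc, ← map_mul, PathAlgebra.ofPath_mul_of_ne K _ _ hj, map_zero,
          mul_zero, smul_zero]
    · rw [idem, ← map_mul, PathAlgebra.ofPath_mul_of_ne K _ _ hi, map_zero, zero_mul, smul_zero]

theorem exists_idem_mul_mul_idem_ne_zero_iff (i j : T.Edge) :
    (∃ x, T.idem K i * x * T.idem K j ≠ 0) ↔ SharesVertex i j := by
  rw [← exists_proj_ofPath_ne_zero_iff K]
  constructor
  · contrapose!
    exact idem_mul_mul_idem_eq_zero K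
  · rintro ⟨p, hp⟩
    exact ⟨_, (idem_mul_proj_ofPath_mul_idem K p).trans_ne hp⟩

theorem nontrivial_projMod_hom_iff (i j : T.Edge) :
    Nontrivial (T.projMod K i ⟶ T.projMod K j) ↔ SharesVertex i j := by
  rw [ModuleCat.homEquiv.nontrivial_congr, ← exists_idem_mul_mul_idem_ne_zero_iff K]
  exact nontrivial_linearMap_span_span_iff (T.idem_mul_self K i) _

/-! ### `A`-cycles -/

variable {K} in
theorem IsArrowChain.fst_eq {L : List T.graph.Dart} (h : T.IsArrowChain K L)
    {d d' : T.graph.Dart} (hd : d ∈ L) (hd' : d' ∈ L) : d.fst = d'.fst := by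
  have hchain : (L.map fun d => d.fst).IsChain (· = ·) :=
    (List.isChain_map _).2 (h.2.imp fun _ _ => fst_eq_of_proj_mul_ne_zero)
  exact hchain.pairwise.forall_of_forall (fun _ _ => rfl) (List.mem_map_of_mem hd)
    (List.mem_map_of_mem hd')

theorem isArrowChain_turn (d : T.graph.Dart) : T.IsArrowChain K (T.turn d) := by
  refine ⟨nodup_turn d, ?_⟩
  rw [turn, List.isChain_map, List.isChain_range]
  intro k hk
  exact proj_arrowElt_mul_next_ne_zero K d (by lia)

theorem isACycle_turn (d : T.graph.Dart) : T.IsACycle K (T.turn d) := by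
  refine ⟨isArrowChain_turn K d, fun L hL hsub => ?_⟩
  have hd : d ∈ L := hsub.subset (mem_turn_iff.2 rfl)
  have hle : L.Subperm (T.turn d) :=
    hL.1.subperm fun e he => mem_turn_iff.2 (hL.fst_eq he hd)
  exact (hsub.eq_of_length_le hle.length_le).symm

theorem sameACycle_iff_sharesVertex (i j : T.Edge) : T.SameACycle K i j ↔ SharesVertex i j := by
  constructor
  · rintro ⟨L, hL, hi, hj⟩
    obtain ⟨d, hd, hdi⟩ := hi.exists_fst_mem
    obtain ⟨d', hd', hdj⟩ := hj.exists_fst_mem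
    exact ⟨d.fst, hdi, hL.1.fst_eq hd hd' ▸ hdj⟩
  · rintro ⟨s, hi, hj⟩
    obtain ⟨d, rfl, rfl⟩ := exists_dart_of_mem hi
    obtain ⟨d', rfl, hd'⟩ := exists_dart_of_mem hj
    exact ⟨T.turn d, isACycle_turn K d, ⟨d, mem_turn_iff.2 rfl, .inl rfl⟩,
      ⟨d', mem_turn_iff.2 hd', .inl rfl⟩⟩

end BrauerTree

theorem hom_between_stalks_nonzero_iff_general {K : Type u} [Field K] {V : Type v} [Fintype V]
    (T : BrauerTree V) (Pi Pj : CochainComplex (ModuleCat.{max u v} (T.Alg K)) ℤ)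
    (i j : T.Edge) (p q : ℤ) (hPi : T.IsStalk K Pi i p) (hPj : T.IsStalk K Pj j q) :
    (∃ f : Kb.of Pi hPi.perfect ⟶ Kb.of Pj hPj.perfect, f ≠ 0) ↔
      p = q ∧ T.SameACycle K i j := by
  have ⟨φ⟩ := hPi
  have ⟨ψ⟩ := hPj
  rw [← nontrivial_iff_exists_ne, Kb.nontrivial_hom_iff hPi.perfect hPj.perfect φ ψ,
    nontrivial_quotient_single_hom_iff, BrauerTree.nontrivial_projMod_hom_iff,
    BrauerTree.sameACycle_iff_sharesVertex]

end

open CategoryTheory Limits in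
theorem hom_between_stalks_nonzero_iff {K : Type u} [Field K] [IsAlgClosed K]
    {V : Type v} [Fintype V] (T : BrauerTree V)
    [HasDerivedCategory.{w} (ModuleCat.{max u v} (T.Alg K))]
    (Pi Pj : CochainComplex (ModuleCat.{max u v} (T.Alg K)) ℤ)
    (i j : T.Edge) (p q : ℤ)
    (hPi : T.IsStalk K Pi i p) (hPj : T.IsStalk K Pj j q)
    (hpt : IsPartialTilting (Pi ⊞ Pj)) :
    (∃ f : Kb.of Pi hPi.perfect ⟶ Kb.of Pj hPj.perfect, f ≠ 0) ↔
      p = q ∧ T.SameACycle K i j :=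
  hom_between_stalks_nonzero_iff_general T Pi Pj i j p q hPi hPj
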